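/- Let K be a field of characteristic zero and h_1,...,h_n ∈ K[x_1,...,x_n]. If h_1,...,h_n are algebraically independent over K, then the determinant of the Jacobian matrix (∂h_i/∂x_j) is a nonzero polynomial in K[x_1,...,x_n]. -/

import Mathlib

/-! If the Jacobian matrix of `h` is singular, a nonzero vector in its kernel gives a nonzero
derivation of the polynomial ring that kills every `h i`. But an algebraically independent family
of as many polynomials as there are variables is a transcendence basis, and in characteristic zero
a derivation that kills a transcendence basis is zero. -/

section Algebraic

open Polynomial

variable {A B : Type*} [CommRing A] [CommRing B] [Algebra A B]

theorem exists_aeval_eq_zero_and_aeval_derivative_ne_zero [IsAddTorsionFree A] [FaithfulSMul A B]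
    {b : B} (hb : IsAlgebraic A b) : ∃ p : A[X], aeval b p = 0 ∧ aeval b (derivative p) ≠ 0 := by
  by_contra! derivative_vanishes
  obtain ⟨p, hp, hpb⟩ := hb
  induction hd : p.natDegree using Nat.strong_induction_on generalizing p with
  | _ d ih =>
    have hdeg : p.natDegree ≠ 0 := (natDegree_pos_of_aeval_root hp hpb fun _ =>
      (FaithfulSMul.algebraMap_eq_zero_iff A B).mp).ne'
    have derivative_ne_zero : derivative p ≠ 0 := mt derivative_eq_zero.mp hdeg
    exact ih _ (hd ▸ natDegree_derivative_lt hdeg) (derivative p) derivative_ne_zero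
      (derivative_vanishes p hpb) rfl

theorem derivation_apply_eq_zero_of_isAlgebraic [IsDomain B] [IsAddTorsionFree A]
    [FaithfulSMul A B] {M : Type*} [AddCommGroup M] [Module A M] [Module B M]
    [Module.IsTorsionFree B M] (D : Derivation A B M) {b : B} (hb : IsAlgebraic A b) :
    D b = 0 := by
  obtain ⟨p, hpb, hp'b⟩ := exists_aeval_eq_zero_and_aeval_derivative_ne_zero hb
  have chain_rule : aeval b (derivative p) • D b = 0 := by rw [← D.map_aeval, hpb, map_zero]
  exact (smul_eq_zero.mp chain_rule).resolve_left hp'b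

end Algebraic

section Derivation

variable {R B M : Type*}

/-- A derivation that vanishes on the image of an algebra map `A → B`, regarded as a derivation
over `A`; `Derivation.restrictScalars` goes the other way. -/
def derivationExtendScalars [CommSemiring R] [CommSemiring B] [Algebra R B] [AddCommMonoid M]
    [Module R M] [Module B M] (A : Type*) [CommSemiring A] [Algebra A B] [Module A M]
    [IsScalarTower A B M] (D : Derivation R B M) (hD : ∀ a : A, D (algebraMap A B a) = 0) :
    Derivation A B M where
  toFun := D
  map_add' := map_add D
  map_smul' a b := by simp [Algebra.smul_def, hD]
  map_one_eq_zero' := D.map_one_eq_zero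
  leibniz' := D.leibniz

theorem derivation_eq_zero_of_isTranscendenceBasis [CommRing R] [CommRing B] [IsDomain B]
    [CharZero B] [Algebra R B] [AddCommGroup M] [Module R M] [Module B M]
    [Module.IsTorsionFree B M] {ι : Type*} {x : ι → B} (hx : IsTranscendenceBasis R x)
    (D : Derivation R B M) (hDx : ∀ i, D (x i) = 0) : D = 0 := by
  have vanishes_on_adjoin (a : Algebra.adjoin R (Set.range x)) : D (a : B) = 0 :=
    Derivation.eqOn_adjoin (D2 := 0) (Set.forall_mem_range.mpr hDx) a.2
  have : Nontrivial R := (algebraMap R B).domain_nontrivial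
  have : Algebra.IsAlgebraic (Algebra.adjoin R (Set.range x)) B := hx.isAlgebraic
  ext b
  exact derivation_apply_eq_zero_of_isAlgebraic
    (derivationExtendScalars (Algebra.adjoin R (Set.range x)) D vanishes_on_adjoin)
    (Algebra.IsAlgebraic.isAlgebraic b)

end Derivation

section Jacobian

open MvPolynomial

variable {R ι : Type*}

theorem mkDerivation_apply_eq_sum_pderiv_smul [CommSemiring R] [Fintype ι] {M : Type*}
    [AddCommMonoid M] [Module R M] [Module (MvPolynomial ι R) M]
    [IsScalarTower R (MvPolynomial ι R) M] (v : ι → M) (f : MvPolynomial ι R) :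
    mkDerivation R v f = ∑ j, pderiv j f • v j := by
  classical
  induction f using MvPolynomial.induction_on with
  | C r => simp
  | add f g hf hg => simp [hf, hg, add_smul, Finset.sum_add_distrib]
  | mul_X f i hf =>
    simp [hf, pderiv_X, Pi.single_apply, add_smul, mul_smul, Finset.smul_sum,
      Finset.sum_add_distrib]

theorem isTranscendenceBasis_mvPolynomial_of_algebraicIndependent [CommRing R] [IsDomain R]
    [Finite ι] {h : ι → MvPolynomial ι R} (hind : AlgebraicIndependent R h) :
    IsTranscendenceBasis R h :=
  hind.isTranscendenceBasis_of_lift_trdeg_le_of_finite (by simp [trdeg_of_isDomain])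

theorem stmt_7_general [CommRing R] [IsDomain R] [CharZero R] [Fintype ι] [DecidableEq ι]
    (h : ι → MvPolynomial ι R) (hind : AlgebraicIndependent R h) :
    Matrix.det (Matrix.of fun i j => pderiv j (h i)) ≠ 0 := by
  intro hdet
  obtain ⟨v, hv, hJv⟩ := Matrix.exists_mulVec_eq_zero_iff.mpr hdet
  have kills_h (i) : mkDerivation R v (h i) = 0 :=
    (mkDerivation_apply_eq_sum_pderiv_smul v (h i)).trans (congrFun hJv i)
  have derivation_eq_zero : mkDerivation R v = 0 := derivation_eq_zero_of_isTranscendenceBasis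
    (isTranscendenceBasis_mvPolynomial_of_algebraicIndependent hind) _ kills_h
  refine hv (funext fun j => ?_)
  rw [← mkDerivation_X R v j, derivation_eq_zero, Derivation.zero_apply, Pi.zero_apply]

end Jacobian

theorem stmt_7 {K : Type*} [Field K] [CharZero K] {n : ℕ}
    (h : Fin n → MvPolynomial (Fin n) K)
    (hind : AlgebraicIndependent K h) :
    Matrix.det (Matrix.of fun i j : Fin n => MvPolynomial.pderiv j (h i)) ≠ 0 :=
  stmt_7_general h hind
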